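/- Let H be a complex Hilbert space of dimension at least 3, U a unitary operator on H, ε ∈ {1, −1}, S a subset of D(H), and f : B_s(H) → ℝ a functional. Define Φ : B_s(H) → B_s(H) by Φ(A) = ε·U A U* + f(A)·I if A ∉ S and Φ(A) = −ε·U A U* + f(A)·I if A ∈ S. Then W(Φ(A)Φ(B) − Φ(B)Φ(A)) = W(AB − BA) for all A, B ∈ B_s(H). -/

import Mathlib

open scoped InnerProductSpace

noncomputable def numRange {H : Type*} [NormedAddCommGroup H] [InnerProductSpace ℂ H]
    (T : H →L[ℂ] H) : Set ℂ :=
  {z | ∃ x : H, ‖x‖ = 1 ∧ ⟪x, T x⟫_ℂ = z}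

/-- `D(H)`: the set of real linear combinations of an orthogonal projection and the identity. -/
def DSet (H : Type*) [NormedAddCommGroup H] [InnerProductSpace ℂ H] [CompleteSpace H] :
    Set (H →L[ℂ] H) :=
  {A | ∃ (P : H →L[ℂ] H) (α δ : ℝ), IsSelfAdjoint P ∧ P * P = P ∧
    A = (α : ℂ) • P + (δ : ℂ) • 1}

theorem numRange_conj_sub {H : Type*} [NormedAddCommGroup H] [InnerProductSpace ℂ H]
    [CompleteSpace H] (U T : H →L[ℂ] H) (hU : U ∈ unitary (H →L[ℂ] H)) :
    numRange T ⊆ numRange (U * T * star U) := by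
  rintro z ⟨x, hx, rfl⟩
  have h1 : star U * U = 1 := (Unitary.mem_iff.mp hU).1
  have h2 : ∀ y, (star U) (U y) = y := fun y => by
    have := congrArg (fun L : H →L[ℂ] H => L y) h1
    simpa using this
  have h3 : ∀ a b, ⟪U a, U b⟫_ℂ = ⟪a, b⟫_ℂ := fun a b => by
    rw [← ContinuousLinearMap.adjoint_inner_right, ← ContinuousLinearMap.star_eq_adjoint, h2]
  refine ⟨U x, ?_, ?_⟩
  · rw [← hx, @norm_eq_sqrt_re_inner ℂ, @norm_eq_sqrt_re_inner ℂ _ _ _ _ x, h3]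
  · show ⟪U x, U (T ((star U) (U x)))⟫_ℂ = _
    rw [h2, h3]

theorem numRange_conj {H : Type*} [NormedAddCommGroup H] [InnerProductSpace ℂ H]
    [CompleteSpace H] (U T : H →L[ℂ] H) (hU : U ∈ unitary (H →L[ℂ] H)) :
    numRange (U * T * star U) = numRange T := by
  apply Set.Subset.antisymm _ (numRange_conj_sub U T hU)
  have h1 : star U * U = 1 := (Unitary.mem_iff.mp hU).1
  have h := numRange_conj_sub (star U) (U * T * star U) (Unitary.star_mem hU)
  have e : star U * (U * T * star U) * star (star U) = T := by
    calc _ = (star U * U) * T * (star U * U) := by rw [star_star]; noncomm_ring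
      _ = T := by rw [h1]; simp
  rwa [e] at h

theorem numRange_neg_D {H : Type*} [NormedAddCommGroup H] [InnerProductSpace ℂ H]
    [CompleteSpace H] (A B : H →L[ℂ] H) (hA : A ∈ DSet H) :
    numRange (-(A * B - B * A)) = numRange (A * B - B * A) := by
  obtain ⟨P, α, δ, hP, hPP, rfl⟩ := hA
  have hs : star (P + P - 1) = P + P - 1 := by simp [hP.star_eq]
  have hV : (P + P - 1) * (P + P - 1) = 1 := by
    calc (P + P - 1) * (P + P - 1) = 4 • (P * P) - 4 • P + 1 := by noncomm_ring
      _ = 1 := by rw [hPP]; simp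
  have hu : P + P - 1 ∈ unitary (H →L[ℂ] H) := by
    rw [Unitary.mem_iff, hs]; exact ⟨hV, hV⟩
  have hC : ((α : ℂ) • P + (δ : ℂ) • 1) * B - B * ((α : ℂ) • P + (δ : ℂ) • 1)
      = (α : ℂ) • (P * B - B * P) := by
    simp only [add_mul, mul_add, smul_mul_assoc, mul_smul_comm, one_mul, mul_one, smul_sub]
    abel
  have hD : (P + P - 1) * (P * B - B * P) * (P + P - 1) = -(P * B - B * P) := by
    have e : (P + P - 1) * (P * B - B * P) * (P + P - 1) =
        4 • ((P * P) * B * P) - 4 • (P * B * (P * P)) - 2 • ((P * P) * B) + 2 • (P * B)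
        - 2 • (P * B * P) + 2 • (P * B * P) + 2 • (B * (P * P)) - B * P
        - P * B := by noncomm_ring
    rw [e, hPP]; noncomm_ring
  rw [hC, ← numRange_conj (P + P - 1) ((α : ℂ) • (P * B - B * P)) hu, hs, mul_smul_comm,
    smul_mul_assoc, hD, smul_neg]

theorem comm_aux {H : Type*} [NormedAddCommGroup H] [InnerProductSpace ℂ H]
    [CompleteSpace H] (U A B : H →L[ℂ] H) (hU : U ∈ unitary (H →L[ℂ] H)) (s t a b : ℂ) :
    (s • (U * A * star U) + a • 1) * (t • (U * B * star U) + b • 1) -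
      (t • (U * B * star U) + b • 1) * (s • (U * A * star U) + a • 1) =
    U * ((s * t) • (A * B - B * A)) * star U := by
  have h1 : star U * U = 1 := (Unitary.mem_iff.mp hU).1
  have h : ∀ X Y : H →L[ℂ] H, (U * X * star U) * (U * Y * star U) = U * (X * Y) * star U := by
    intro X Y
    calc _ = U * X * (star U * U) * Y * star U := by noncomm_ring
      _ = _ := by rw [h1]; noncomm_ring
  have h' : U * (A * B - B * A) * star U = U * (A * B) * star U - U * (B * A) * star U := by
    noncomm_ring
  rw [mul_smul_comm, smul_mul_assoc, h', ← h, ← h]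
  generalize U * A * star U = X
  generalize U * B * star U = Y
  simp only [add_mul, mul_add, smul_mul_assoc, mul_smul_comm, one_mul, mul_one]
  module

theorem stmt_4 {H : Type*} [NormedAddCommGroup H] [InnerProductSpace ℂ H] [CompleteSpace H]
    (hdim : 3 ≤ Module.rank ℂ H)
    (U : H →L[ℂ] H) (hU : U ∈ unitary (H →L[ℂ] H))
    (ε : ℝ) (hε : ε = 1 ∨ ε = -1)
    (S : Set {T : H →L[ℂ] H // IsSelfAdjoint T})
    (hS : ∀ A ∈ S, (A : H →L[ℂ] H) ∈ DSet H)
    (f : {T : H →L[ℂ] H // IsSelfAdjoint T} → ℝ)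
    (Φ : {T : H →L[ℂ] H // IsSelfAdjoint T} → {T : H →L[ℂ] H // IsSelfAdjoint T})
    (hΦ : ∀ A : {T : H →L[ℂ] H // IsSelfAdjoint T},
      (A ∉ S → (Φ A : H →L[ℂ] H) =
        (ε : ℂ) • (U * (A : H →L[ℂ] H) * star U) + (f A : ℂ) • 1) ∧
      (A ∈ S → (Φ A : H →L[ℂ] H) =
        (-ε : ℂ) • (U * (A : H →L[ℂ] H) * star U) + (f A : ℂ) • 1)) :
    ∀ A B : {T : H →L[ℂ] H // IsSelfAdjoint T},
      numRange ((Φ A : H →L[ℂ] H) * (Φ B : H →L[ℂ] H) -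
          (Φ B : H →L[ℂ] H) * (Φ A : H →L[ℂ] H)) =
        numRange ((A : H →L[ℂ] H) * (B : H →L[ℂ] H) - (B : H →L[ℂ] H) * (A : H →L[ℂ] H)) := by
  intro A B
  have hee : (ε : ℂ) * ε = 1 := by rcases hε with rfl | rfl <;> simp
  by_cases hA : A ∈ S <;> by_cases hB : B ∈ S
  · rw [(hΦ A).2 hA, (hΦ B).2 hB, comm_aux _ _ _ hU, numRange_conj _ _ hU]
    simp [hee]
  · rw [(hΦ A).2 hA, (hΦ B).1 hB, comm_aux _ _ _ hU, numRange_conj _ _ hU,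
      ← numRange_neg_D _ _ (hS A hA)]
    simp [hee]
  · rw [(hΦ A).1 hA, (hΦ B).2 hB, comm_aux _ _ _ hU, numRange_conj _ _ hU,
      ← neg_sub (B.1 * A.1), numRange_neg_D _ _ (hS B hB)]
    simp [hee]
  · rw [(hΦ A).1 hA, (hΦ B).1 hB, comm_aux _ _ _ hU, numRange_conj _ _ hU]
    simp [hee]
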